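/- Completeness of the labelled sequent calculus for CPL₀: if a labelled sequent ⊢ L is valid (that is, ⟦b⟧ ⊆ ⟦A⟧ when L = b ↣ A, respectively ⟦A⟧ ⊆ ⟦b⟧ when L = b ↢ A), then ⊢ L is derivable in the proof system for CPL₀. -/

import Mathlib

open MeasureTheory

/-- The Cantor space `2^ω` of infinite binary sequences. -/
abbrev Cantor : Type := ℕ → Bool

/-- Rational numbers in the unit interval `[0,1]`. -/
abbrev I01 : Type := (Set.Icc (0 : ℚ) 1)

/-- The value of a rational `q ∈ [0,1]` as an extended nonnegative real. -/
noncomputable def qq (q : I01) : ENNReal := ENNReal.ofReal (q.1 : ℝ)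

/-- `μ` is the fair-coin Bernoulli (uniform) product measure on the Cantor space:
it is a probability measure giving each cylinder fixing the values on a finite set `s`
of coordinates the measure `2^{-|s|}`. -/
def IsCantorMeasure (μ : Measure Cantor) : Prop :=
  IsProbabilityMeasure μ ∧
    ∀ (s : Finset ℕ) (v : ℕ → Bool),
      μ {f : Cantor | ∀ i ∈ s, f i = v i} = (2 : ENNReal)⁻¹ ^ s.card

/-- Boolean formulas `b ::= xᵢ | ⊤ | ⊥ | ¬b | b ∧ c | b ∨ c`. -/
inductive BF : Type where
  | var : ℕ → BF
  | tt : BF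
  | ff : BF
  | neg : BF → BF
  | conj : BF → BF → BF
  | disj : BF → BF → BF
deriving DecidableEq

/-- The interpretation `⟦b⟧ ⊆ 2^ω` of a Boolean formula. -/
def BF.sem : BF → Set Cantor
  | .var i => {f | f i = true}
  | .tt => Set.univ
  | .ff => ∅
  | .neg b => (BF.sem b)ᶜ
  | .conj b c => BF.sem b ∩ BF.sem c
  | .disj b c => BF.sem b ∪ BF.sem c

/-- Formulas of univariate counting propositional logic CPL₀:
`A ::= i | ¬A | A ∧ B | A ∨ B | C^q A | D^q A` with `q` a rational in `[0,1]`. -/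
inductive CPL0 : Type where
  | atom : ℕ → CPL0
  | neg : CPL0 → CPL0
  | conj : CPL0 → CPL0 → CPL0
  | disj : CPL0 → CPL0 → CPL0
  | cnt : I01 → CPL0 → CPL0
  | dnt : I01 → CPL0 → CPL0
deriving DecidableEq

open scoped Classical in
/-- The interpretation `⟦A⟧ ⊆ 2^ω` of a CPL₀ formula (relative to the measure `μ`). -/
noncomputable def CPL0.sem (μ : Measure Cantor) : CPL0 → Set Cantor
  | .atom i => {f | f i = true}
  | .neg A => (CPL0.sem μ A)ᶜ
  | .conj A B => CPL0.sem μ A ∩ CPL0.sem μ B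
  | .disj A B => CPL0.sem μ A ∪ CPL0.sem μ B
  | .cnt q A => if qq q ≤ μ (CPL0.sem μ A) then Set.univ else ∅
  | .dnt q A => if μ (CPL0.sem μ A) < qq q then Set.univ else ∅

/-- Labelled formulas: `b ↣ A` (`fwd`) and `b ↢ A` (`bwd`). -/
inductive LF : Type where
  | fwd : BF → CPL0 → LF
  | bwd : BF → CPL0 → LF
deriving DecidableEq

/-- Validity of a labelled formula: `b ↣ A` is valid when `⟦b⟧ ⊆ ⟦A⟧`,
and `b ↢ A` is valid when `⟦A⟧ ⊆ ⟦b⟧`. -/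
def LF.valid (μ : Measure Cantor) : LF → Prop
  | .fwd b A => BF.sem b ⊆ CPL0.sem μ A
  | .bwd b A => CPL0.sem μ A ⊆ BF.sem b

/-- The labelled, one-sided, single-succedent sequent calculus for CPL₀:
`Der μ L` means that the sequent `⊢ L` is derivable. -/
inductive Der (μ : Measure Cantor) : LF → Prop where
  | ax1 {b : BF} {n : ℕ} :
      BF.sem b ⊆ BF.sem (.var n) → Der μ (.fwd b (.atom n))
  | ax2 {b : BF} {n : ℕ} :
      BF.sem (.var n) ⊆ BF.sem b → Der μ (.bwd b (.atom n))
  | runion {b c d : BF} {A : CPL0} :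
      Der μ (.fwd c A) → Der μ (.fwd d A) →
      BF.sem b ⊆ BF.sem (.disj c d) → Der μ (.fwd b A)
  | rinter {b c d : BF} {A : CPL0} :
      Der μ (.bwd c A) → Der μ (.bwd d A) →
      BF.sem (.conj c d) ⊆ BF.sem b → Der μ (.bwd b A)
  | negF {b c : BF} {A : CPL0} :
      Der μ (.bwd c A) → BF.sem b ⊆ BF.sem (.neg c) → Der μ (.fwd b (.neg A))
  | negB {b c : BF} {A : CPL0} :
      Der μ (.fwd c A) → BF.sem (.neg c) ⊆ BF.sem b → Der μ (.bwd b (.neg A))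
  | disjF1 {b : BF} {A B : CPL0} :
      Der μ (.fwd b A) → Der μ (.fwd b (.disj A B))
  | disjF2 {b : BF} {A B : CPL0} :
      Der μ (.fwd b B) → Der μ (.fwd b (.disj A B))
  | disjB {b : BF} {A B : CPL0} :
      Der μ (.bwd b A) → Der μ (.bwd b B) → Der μ (.bwd b (.disj A B))
  | conjF {b : BF} {A B : CPL0} :
      Der μ (.fwd b A) → Der μ (.fwd b B) → Der μ (.fwd b (.conj A B))
  | conjB1 {b : BF} {A B : CPL0} :
      Der μ (.bwd b A) → Der μ (.bwd b (.conj A B))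
  | conjB2 {b : BF} {A B : CPL0} :
      Der μ (.bwd b B) → Der μ (.bwd b (.conj A B))
  | muF {b : BF} {A : CPL0} :
      μ (BF.sem b) = 0 → Der μ (.fwd b A)
  | muB {b : BF} {A : CPL0} :
      μ (BF.sem b) = 1 → Der μ (.bwd b A)
  | cntF {b c : BF} {q : I01} {A : CPL0} :
      Der μ (.fwd c A) → qq q ≤ μ (BF.sem c) → Der μ (.fwd b (.cnt q A))
  | cntB {b c : BF} {q : I01} {A : CPL0} :
      Der μ (.bwd c A) → μ (BF.sem c) < qq q → Der μ (.bwd b (.cnt q A))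
  | dntF {b c : BF} {q : I01} {A : CPL0} :
      Der μ (.bwd c A) → μ (BF.sem c) < qq q → Der μ (.fwd b (.dnt q A))
  | dntB {b c : BF} {q : I01} {A : CPL0} :
      Der μ (.fwd c A) → qq q ≤ μ (BF.sem c) → Der μ (.bwd b (.dnt q A))

/-!
A counting formula denotes either the whole space or the empty set, so by recursion every formula
`A` denotes the same set as some Boolean formula `b`. Each step of this recursion is matched by
rules of the calculus, which therefore derives both `b ↣ A` and `b ↢ A`. A valid labelled formula
with right-hand side `A` then follows from one of these two by changing the label.
-/

namespace Der

variable {μ : Measure Cantor} {b c : BF} {A B : CPL0}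

theorem fwd_of_subset (hc : Der μ (.fwd c A)) (hbc : b.sem ⊆ c.sem) : Der μ (.fwd b A) :=
  .runion hc hc (hbc.trans Set.subset_union_left)

theorem bwd_of_subset (hc : Der μ (.bwd c A)) (hcb : c.sem ⊆ b.sem) : Der μ (.bwd b A) :=
  .rinter hc hc (Set.inter_subset_left.trans hcb)

theorem fwd_ff : Der μ (.fwd .ff A) :=
  .muF measure_empty

theorem bwd_tt [IsProbabilityMeasure μ] : Der μ (.bwd .tt A) :=
  .muB measure_univ

theorem fwd_conj (hA : Der μ (.fwd b A)) (hB : Der μ (.fwd c B)) :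
    Der μ (.fwd (.conj b c) (.conj A B)) :=
  .conjF (hA.fwd_of_subset Set.inter_subset_left) (hB.fwd_of_subset Set.inter_subset_right)

theorem bwd_conj (hA : Der μ (.bwd b A)) (hB : Der μ (.bwd c B)) :
    Der μ (.bwd (.conj b c) (.conj A B)) :=
  .rinter (.conjB1 hA) (.conjB2 hB) subset_rfl

theorem fwd_disj (hA : Der μ (.fwd b A)) (hB : Der μ (.fwd c B)) :
    Der μ (.fwd (.disj b c) (.disj A B)) :=
  .runion (.disjF1 hA) (.disjF2 hB) subset_rfl

theorem bwd_disj (hA : Der μ (.bwd b A)) (hB : Der μ (.bwd c B)) :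
    Der μ (.bwd (.disj b c) (.disj A B)) :=
  .disjB (hA.bwd_of_subset Set.subset_union_left) (hB.bwd_of_subset Set.subset_union_right)

end Der

namespace CPL0

open scoped Classical in
/-- A Boolean formula with the same interpretation as the given CPL₀ formula, used as its canonical
label. The counting quantifiers test the measure of the Boolean translation of their argument, as
the counting rules of the calculus do. -/
noncomputable def toBF (μ : Measure Cantor) : CPL0 → BF
  | .atom n => .var n
  | .neg A => .neg (A.toBF μ)
  | .conj A B => .conj (A.toBF μ) (B.toBF μ)
  | .disj A B => .disj (A.toBF μ) (B.toBF μ)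
  | .cnt q A => if qq q ≤ μ (A.toBF μ).sem then .tt else .ff
  | .dnt q A => if μ (A.toBF μ).sem < qq q then .tt else .ff

theorem sem_toBF (μ : Measure Cantor) (A : CPL0) : (A.toBF μ).sem = A.sem μ := by
  induction A with
  | atom n => rfl
  | neg A ih => simp only [toBF, BF.sem, sem, ih]
  | conj A B ihA ihB => simp only [toBF, BF.sem, sem, ihA, ihB]
  | disj A B ihA ihB => simp only [toBF, BF.sem, sem, ihA, ihB]
  | cnt q A ih => simp only [toBF, sem, ih, apply_ite BF.sem, BF.sem]
  | dnt q A ih => simp only [toBF, sem, ih, apply_ite BF.sem, BF.sem]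

end CPL0

namespace Der

theorem fwd_and_bwd_toBF (μ : Measure Cantor) [IsProbabilityMeasure μ] (A : CPL0) :
    Der μ (.fwd (A.toBF μ) A) ∧ Der μ (.bwd (A.toBF μ) A) := by
  induction A with
  | atom n => exact ⟨.ax1 subset_rfl, .ax2 subset_rfl⟩
  | neg A ih => exact ⟨.negF ih.2 subset_rfl, .negB ih.1 subset_rfl⟩
  | conj A B ihA ihB => exact ⟨fwd_conj ihA.1 ihB.1, bwd_conj ihA.2 ihB.2⟩
  | disj A B ihA ihB => exact ⟨fwd_disj ihA.1 ihB.1, bwd_disj ihA.2 ihB.2⟩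
  | cnt q A ih =>
    rw [CPL0.toBF]
    split_ifs with hq
    · exact ⟨.cntF ih.1 hq, bwd_tt⟩
    · exact ⟨fwd_ff, .cntB ih.2 (not_le.mp hq)⟩
  | dnt q A ih =>
    rw [CPL0.toBF]
    split_ifs with hq
    · exact ⟨.dntF ih.2 hq, bwd_tt⟩
    · exact ⟨fwd_ff, .dntB ih.1 (not_lt.mp hq)⟩

end Der

theorem cpl0_completeness_general (μ : Measure Cantor) [IsProbabilityMeasure μ] (L : LF)
    (h : L.valid μ) : Der μ L := by
  cases L with
  | fwd b A =>
    have hb : b.sem ⊆ (A.toBF μ).sem := (CPL0.sem_toBF μ A).symm ▸ h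
    exact (Der.fwd_and_bwd_toBF μ A).1.fwd_of_subset hb
  | bwd b A =>
    have hb : (A.toBF μ).sem ⊆ b.sem := (CPL0.sem_toBF μ A).symm ▸ h
    exact (Der.fwd_and_bwd_toBF μ A).2.bwd_of_subset hb

/-- **Completeness.** If a labelled sequent `⊢ L` is valid
(`⟦b⟧ ⊆ ⟦A⟧` when `L = b ↣ A`, resp. `⟦A⟧ ⊆ ⟦b⟧` when `L = b ↢ A`), then `⊢ L` is
derivable in the proof system for CPL₀. -/
theorem cpl0_completeness
    (μ : Measure Cantor) (hμ : IsCantorMeasure μ) (L : LF) (h : L.valid μ) :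
    Der μ L := by
  have : IsProbabilityMeasure μ := hμ.1
  exact cpl0_completeness_general μ L h
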